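/- Fix integers ℓ≥1 and n≥0. Then Σ_{σ ∈ G_{ℓ,n}} q^{fmaf σ} x^{fix σ} = Σ_{k=0}^n x^{n−k} · [n choose k]_{q^ℓ} · d_{ℓ,k}(q), where d_{ℓ,k}(q) = Σ_{π ∈ D_{ℓ,k}} q^{fmaj π}. -/

import Mathlib

/-!
A colored permutation `σ` is determined by its set `S` of non-fixed positions together with its
derangement part `π = Der σ`, and for each `S` of size `k` every derangement `π ∈ D_{ℓ,k}` occurs:
the fixed points, being positions and values at the same time, may be reinserted anywhere
(`CP.plant`). Under this correspondence `fix σ = n - k`, `col σ = col π`, and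
`maf σ = maj π + w(S)`, where `w(S) = Σ_{i ∉ S} i - (n-k choose 2)` depends on `S` alone. The sum
over the colored permutations with non-fixed set `S` is therefore
`x^{n-k} q^{ℓ w(S)} d_{ℓ,k}(q)` (`CP.sum_fiber`).

It remains to see that `Σ_{|S| = k} q^{w(S)} = [n choose k]_q` (`sum_qpow_compl`). Splitting the
subsets of `{0, …, n}` of size `k + 1` according to whether they contain the last element `n` gives
precisely the q-Pascal recurrence: if `n ∈ S`, the complement is unchanged by removing it, and if
`n ∉ S`, deleting `n` from the complement lowers `w` by `n - (n-k-1) = k + 1`.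
-/

open Finset

/-- A colored permutation in `G_{ℓ,n} ≅ C_ℓ ≀ S_n`: an underlying permutation of `Fin n`
together with a color (exponent of `ζ`) attached to each position. The letter at (0-based)
position `i` of the word of `σ` is `ζ^(σ.2 i) · (σ.1 i + 1)` (1-based value `σ.1 i + 1`). -/
abbrev CP (ℓ n : ℕ) := Equiv.Perm (Fin n) × (Fin n → Fin ℓ)

namespace CP

variable {ℓ n : ℕ}

/-- `gtLetter a b` : the letter `a = (colorIndex, value)` is greater than `b` in the order
`1 > ζ > ⋯ > ζ^{ℓ-1}` on colors, colors compared first. -/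
def gtLetter (a b : ℕ × ℕ) : Prop := a.1 < b.1 ∨ (a.1 = b.1 ∧ b.2 < a.2)

instance (a b : ℕ × ℕ) : Decidable (gtLetter a b) := by unfold gtLetter; infer_instance

/-- The letter (color index, 0-based absolute value) at 0-based position `i`. -/
def letter (σ : CP ℓ n) (i : ℕ) : ℕ × ℕ :=
  if h : i < n then ((σ.2 ⟨i, h⟩ : ℕ), (σ.1 ⟨i, h⟩ : ℕ)) else (0, 0)

/-- 0-based descent positions : `i < n-1` such that `x_{i+1} > x_{i+2}` (1-based positions). -/
def desSet (σ : CP ℓ n) : Finset ℕ :=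
  (range (n - 1)).filter fun i => gtLetter (letter σ i) (letter σ (i + 1))

/-- Major index: sum of the (1-based) descent places. -/
def maj (σ : CP ℓ n) : ℕ := ∑ i ∈ desSet σ, (i + 1)

/-- Number of descents. -/
def des (σ : CP ℓ n) : ℕ := (desSet σ).card

/-- `col σ = Σ_j j·#{i : ε_{x_i} = ζ^j}`. -/
def col (σ : CP ℓ n) : ℕ := ∑ i, (σ.2 i : ℕ)

/-- flag major index. -/
def fmaj (σ : CP ℓ n) : ℕ := ℓ * maj σ + col σ

/-- The set of fixed points (position fixed and color `ζ^0 = 1`). -/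
def fixSet (σ : CP ℓ n) : Finset (Fin n) :=
  univ.filter fun i => σ.1 i = i ∧ (σ.2 i : ℕ) = 0

def fix (σ : CP ℓ n) : ℕ := (fixSet σ).card

/-- Number of excedances `x_i > i`. -/
def exc (σ : CP ℓ n) : ℕ :=
  (univ.filter fun i : Fin n => (σ.2 i : ℕ) = 0 ∧ (i : ℕ) < (σ.1 i : ℕ)).card

lemma card_nonfix (σ : CP ℓ n) : ((fixSet σ)ᶜ).card = n - fix σ := by
  rw [Finset.card_compl, fix, Fintype.card_fin]

lemma card_vals (σ : CP ℓ n) : (((fixSet σ)ᶜ).image σ.1).card = n - fix σ := by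
  rw [Finset.card_image_of_injective _ σ.1.injective, card_nonfix]

/-- The bijection from nonfixed positions to the set of their values. -/
def derMid (σ : CP ℓ n) :
    {x // x ∈ ((fixSet σ)ᶜ : Finset (Fin n))} ≃ {x // x ∈ ((fixSet σ)ᶜ).image σ.1} where
  toFun p := ⟨σ.1 p.1, Finset.mem_image_of_mem _ p.2⟩
  invFun v := ⟨σ.1.symm v.1, by
    obtain ⟨p, hp, hpv⟩ := Finset.mem_image.mp v.2
    simpa [← hpv] using hp⟩
  left_inv p := by simp
  right_inv v := by simp

/-- The derangement part `Der σ`: delete the fixed points of the word of `σ`, replace each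
absolute value by its rank among the remaining values, and keep the colors. -/
def Der (σ : CP ℓ n) : CP ℓ (n - fix σ) :=
  let eP := ((fixSet σ)ᶜ).orderIsoOfFin (card_nonfix σ)
  let eV := (((fixSet σ)ᶜ).image σ.1).orderIsoOfFin (card_vals σ)
  (eP.toEquiv.trans ((derMid σ).trans eV.toEquiv.symm), fun i => σ.2 (eP i))

/-- `maf σ = maj (Der σ) + Σ_{j=1}^k (i_j − j)` over the (1-based) fixed points
`i_1 < ⋯ < i_k`; with 0-based fixed positions this is `Σ f − k(k−1)/2`. -/
def maf (σ : CP ℓ n) : ℕ := maj (Der σ) + ((∑ i ∈ fixSet σ, (i : ℕ)) - (fix σ).choose 2)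

/-- flag maf. -/
def fmaf (σ : CP ℓ n) : ℕ := ℓ * maf σ + col σ

end CP

/-- The q-integer `[k]_q = 1 + q + ⋯ + q^{k-1}`. -/
def qint {R : Type*} [CommSemiring R] (q : R) (k : ℕ) : R := ∑ i ∈ range k, q ^ i

/-- The Gaussian binomial coefficient `[n choose k]_q` (a polynomial in `q`, evaluated at
`q : R`), defined by the q-Pascal recurrence `[n+1,k+1]_q = [n,k]_q + q^{k+1}·[n,k+1]_q`;
it equals `(q;q)_n / ((q;q)_k (q;q)_{n-k})`. -/
def qbinom {R : Type*} [CommSemiring R] (q : R) : ℕ → ℕ → R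
  | _, 0 => 1
  | 0, _ + 1 => 0
  | n + 1, k + 1 => qbinom q n k + q ^ (k + 1) * qbinom q n (k + 1)

/-! ### The q-binomial coefficient as a sum over subsets -/

/-- A finite set of naturals has sum at least `0 + 1 + ⋯ + (#s - 1)`, so the subtraction in `maf`
never truncates. -/
lemma choose_two_le_sum (s : Finset ℕ) : (#s).choose 2 ≤ ∑ i ∈ s, i := by
  induction s using Finset.induction_on_max with
  | empty => simp
  | insert a s hs ih =>
    have ha : a ∉ s := fun h => lt_irrefl _ (hs a h)
    have hc : #s ≤ a := by
      simpa using Finset.card_le_card (fun x hx => mem_range.2 (hs x hx) : s ⊆ range a)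
    rw [card_insert_of_notMem ha, sum_insert ha, Nat.choose_succ_succ' _ 1, Nat.choose_one_right]
    lia

lemma sum_range_id_eq_choose (n : ℕ) : ∑ i ∈ range n, i = n.choose 2 := by
  rw [sum_range_id, Nat.choose_two_right]

lemma sum_qpow_compl_range {R : Type*} [CommSemiring R] (q : R) (n k : ℕ) :
    ∑ S ∈ powersetCard k (range n), q ^ ((∑ i ∈ range n \ S, i) - (n - k).choose 2) =
      qbinom q n k := by
  induction n generalizing k with
  | zero =>
    cases k with
    | zero => simp [qbinom]
    | succ k => simp [qbinom]
  | succ n ih =>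
    cases k with
    | zero => simp [qbinom, sum_range_id_eq_choose]
    | succ k =>
      have hn : n ∉ range n := by simp
      rw [range_add_one, powersetCard_succ_insert hn, sum_union, sum_image, qbinom, add_comm]
      · congr 1
        · rw [← ih k]
          refine sum_congr rfl fun S hS => ?_
          rw [insert_sdiff_insert, sdiff_insert_of_notMem hn, Nat.add_sub_add_right]
        · rw [← ih (k + 1), mul_sum]
          refine sum_congr rfl fun S hS => ?_
          obtain ⟨hS, hc⟩ := mem_powersetCard.1 hS
          have hnS : n ∉ S := fun h => hn (hS h)
          have hk : k + 1 ≤ n := by simpa [hc] using card_le_card hS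
          have hcard : #(range n \ S) = n - (k + 1) := by simp [card_sdiff_of_subset hS, hc]
          have hle := choose_two_le_sum (range n \ S)
          obtain ⟨m, rfl⟩ := Nat.exists_eq_add_of_le hk
          rw [hcard, Nat.add_sub_cancel_left] at hle
          rw [insert_sdiff_of_notMem _ hnS, sum_insert (by simp), ← pow_add,
            show k + 1 + m + 1 - (k + 1) = m + 1 by lia, Nat.add_sub_cancel_left,
            Nat.choose_succ_succ' _ 1, Nat.choose_one_right]
          congr 1
          lia
      · intro S hS T hT h
        have hnS : n ∉ S := fun h => hn ((mem_powersetCard.1 hS).1 h)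
        have hnT : n ∉ T := fun h => hn ((mem_powersetCard.1 hT).1 h)
        rw [← erase_insert hnS, ← erase_insert hnT]
        exact congrArg (fun U => U.erase n) h
      · rw [disjoint_left]
        intro S hS hS'
        obtain ⟨T, -, rfl⟩ := mem_image.1 hS'
        exact hn ((mem_powersetCard.1 hS).1 (mem_insert_self _ _))

lemma sum_qpow_compl {R : Type*} [CommSemiring R] (q : R) (n k : ℕ) :
    ∑ S ∈ powersetCard k (univ : Finset (Fin n)),
      q ^ ((∑ i ∈ Sᶜ, (i : ℕ)) - (n - k).choose 2) = qbinom q n k := by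
  have hr : range n = (univ : Finset (Fin n)).map Fin.valEmbedding := by
    rw [Fin.map_valEmbedding_univ, Nat.Iio_eq_range]
  rw [← sum_qpow_compl_range, hr, powersetCard_map, sum_map]
  refine sum_congr rfl fun S _ => ?_
  rw [RelEmbedding.coe_toEmbedding, mapEmbedding_apply, ← Finset.map_sdiff, sum_map,
    compl_eq_univ_sdiff]
  rfl

/-! ### Reinserting fixed points into a derangement -/

namespace CP

variable {ℓ n k : ℕ}

/-- The colored permutation acting on the positions `S` as `π` does (through the increasing
bijection `Fin k ≃ S`) and fixing every position outside `S`, with color `0` there. -/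
def plant (hℓ : 1 ≤ ℓ) (S : Finset (Fin n)) (hS : #S = k) (π : CP ℓ k) : CP ℓ n :=
  (π.1.extendDomain (S.orderIsoOfFin hS).toEquiv,
    fun i => if h : i ∈ S then π.2 ((S.orderIsoOfFin hS).symm ⟨i, h⟩) else ⟨0, hℓ⟩)

section plant

variable (hℓ : 1 ≤ ℓ) (S : Finset (Fin n)) (hS : #S = k) (π : CP ℓ k)

lemma exists_orderEmbOfFin {i : Fin n} (hi : i ∈ S) : ∃ j, S.orderEmbOfFin hS j = i := by
  have h := S.range_orderEmbOfFin hS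
  exact (h.symm ▸ (mem_coe.2 hi) : i ∈ Set.range (S.orderEmbOfFin hS))

lemma plant_fst_emb (j : Fin k) :
    (plant hℓ S hS π).1 (S.orderEmbOfFin hS j) = S.orderEmbOfFin hS (π.1 j) :=
  Equiv.Perm.extendDomain_apply_image π.1 (S.orderIsoOfFin hS).toEquiv j

lemma plant_snd_emb (j : Fin k) : (plant hℓ S hS π).2 (S.orderEmbOfFin hS j) = π.2 j := by
  have h : S.orderEmbOfFin hS j ∈ S := S.orderEmbOfFin_mem hS j
  have h' : (⟨S.orderEmbOfFin hS j, h⟩ : S) = S.orderIsoOfFin hS j := rfl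
  simp only [plant, dif_pos h, h', OrderIso.symm_apply_apply]

lemma plant_fst_of_notMem {i : Fin n} (hi : i ∉ S) : (plant hℓ S hS π).1 i = i :=
  Equiv.Perm.extendDomain_apply_not_subtype π.1 (S.orderIsoOfFin hS).toEquiv hi

lemma plant_snd_of_notMem {i : Fin n} (hi : i ∉ S) : (plant hℓ S hS π).2 i = ⟨0, hℓ⟩ :=
  dif_neg hi

lemma fixSet_plant (hπ : fix π = 0) : fixSet (plant hℓ S hS π) = Sᶜ := by
  ext i
  by_cases hi : i ∈ S
  · obtain ⟨j, rfl⟩ := exists_orderEmbOfFin S hS hi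
    have hj : j ∉ fixSet π := by simp [card_eq_zero.1 hπ]
    simpa [fixSet, plant_fst_emb, plant_snd_emb] using hj
  · simp [fixSet, plant_fst_of_notMem, plant_snd_of_notMem, hi]

lemma col_plant : col (plant hℓ S hS π) = col π := by
  have h : ∑ i ∈ S, ((plant hℓ S hS π).2 i : ℕ) = col (plant hℓ S hS π) :=
    sum_subset (subset_univ S) fun i _ hi => by rw [plant_snd_of_notMem _ _ _ _ hi]
  rw [← h]
  conv_lhs => enter [1]; rw [← S.map_orderEmbOfFin_univ hS]
  rw [sum_map]
  exact sum_congr rfl fun j _ => congrArg Fin.val (plant_snd_emb hℓ S hS π j)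

lemma plant_injective : Function.Injective (plant hℓ S hS) := by
  intro π π' h
  refine Prod.ext (Equiv.ext fun j => ?_) (funext fun j => ?_)
  · apply (S.orderEmbOfFin hS).injective
    rw [← plant_fst_emb hℓ, ← plant_fst_emb hℓ, h]
  · rw [← plant_snd_emb hℓ S hS, ← plant_snd_emb hℓ S hS, h]

end plant

lemma orderEmbOfFin_congr {S T : Finset (Fin n)} (h : S = T) (hS : #S = k) (hT : #T = k)
    (j : Fin k) : S.orderEmbOfFin hS j = T.orderEmbOfFin hT j := by
  subst h; rfl

/-- `σ` fixes each element of `fixSet σ`, hence permutes the complement. -/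
lemma apply_mem_compl_fixSet (σ : CP ℓ n) (i : Fin n) :
    σ.1 i ∈ (fixSet σ)ᶜ ↔ i ∈ (fixSet σ)ᶜ := by
  simp only [mem_compl, not_iff_not]
  constructor
  · intro h
    have h1 : σ.1 i = i := σ.1.injective (mem_filter.1 h).2.1
    rwa [h1] at h
  · intro h
    rwa [(mem_filter.1 h).2.1]

lemma image_compl_fixSet (σ : CP ℓ n) : ((fixSet σ)ᶜ).image σ.1 = (fixSet σ)ᶜ := by
  refine eq_of_subset_of_card_le ?_ (card_image_of_injective _ σ.1.injective).ge
  intro v hv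
  obtain ⟨i, hi, rfl⟩ := mem_image.1 hv
  exact (apply_mem_compl_fixSet σ i).2 hi

/-- Every `σ` arises by reinserting its fixed points into a derangement. -/
lemma exists_plant (hℓ : 1 ≤ ℓ) (S : Finset (Fin n)) (hS : #S = k) (σ : CP ℓ n)
    (hσ : fixSet σ = Sᶜ) : ∃ π : CP ℓ k, fix π = 0 ∧ plant hℓ S hS π = σ := by
  have hmem : ∀ i, σ.1 i ∈ S ↔ i ∈ S := by
    simpa [hσ] using apply_mem_compl_fixSet σ
  let e := (S.orderIsoOfFin hS).toEquiv
  let π : CP ℓ k :=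
    (e.trans ((σ.1.subtypePerm hmem).trans e.symm), fun j => σ.2 (S.orderEmbOfFin hS j))
  have hπ : ∀ j, S.orderEmbOfFin hS (π.1 j) = σ.1 (S.orderEmbOfFin hS j) := fun j =>
    congrArg Subtype.val (e.apply_symm_apply (σ.1.subtypePerm hmem (e j)))
  have hout : ∀ i ∉ S, σ.1 i = i ∧ (σ.2 i : ℕ) = 0 := fun i hi =>
    (mem_filter.1 (hσ ▸ mem_compl.2 hi : i ∈ fixSet σ)).2
  refine ⟨π, ?_, Prod.ext (Equiv.ext fun i => ?_) (funext fun i => ?_)⟩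
  · refine card_eq_zero.2 (eq_empty_of_forall_notMem fun j hj => ?_)
    obtain ⟨-, h1, h2⟩ := mem_filter.1 hj
    have h : S.orderEmbOfFin hS j ∈ fixSet σ := by
      refine mem_filter.2 ⟨mem_univ _, ?_, h2⟩
      rw [← hπ, h1]
    rw [hσ, mem_compl] at h
    exact h (S.orderEmbOfFin_mem hS j)
  · by_cases hi : i ∈ S
    · obtain ⟨j, rfl⟩ := exists_orderEmbOfFin S hS hi
      rw [plant_fst_emb, hπ]
    · rw [plant_fst_of_notMem _ _ _ _ hi, (hout i hi).1]
  · by_cases hi : i ∈ S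
    · obtain ⟨j, rfl⟩ := exists_orderEmbOfFin S hS hi
      rw [plant_snd_emb]
    · rw [plant_snd_of_notMem _ _ _ _ hi]
      exact Fin.ext (hout i hi).2.symm

/-- Characterization of `Der σ` by its values. It is stated for `maj` only and with a free size `k`
to avoid transporting `Der σ` along `n - fix σ = k`. -/
lemma maj_Der_eq (σ : CP ℓ n) (hk : n - fix σ = k) (hc : #(fixSet σ)ᶜ = k) (π : CP ℓ k)
    (h1 : ∀ j, σ.1 ((fixSet σ)ᶜ.orderEmbOfFin hc j) = (fixSet σ)ᶜ.orderEmbOfFin hc (π.1 j))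
    (h2 : ∀ j, σ.2 ((fixSet σ)ᶜ.orderEmbOfFin hc j) = π.2 j) :
    maj (Der σ) = maj π := by
  subst hk
  refine congrArg maj (Prod.ext (Equiv.ext fun j => ?_) (funext h2))
  refine (OrderIso.symm_apply_eq (Finset.orderIsoOfFin _ (card_vals σ))).2 (Subtype.ext ?_)
  exact (h1 j).trans (orderEmbOfFin_congr (image_compl_fixSet σ) (card_vals σ) hc (π.1 j)).symm

/-- The statistics of a colored permutation with non-fixed set `S` in terms of its derangement
part. -/
lemma fmaf_plant (hℓ : 1 ≤ ℓ) (S : Finset (Fin n)) (hS : #S = k) (π : CP ℓ k)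
    (hπ : fix π = 0) :
    fix (plant hℓ S hS π) = n - k ∧
      fmaf (plant hℓ S hS π) = ℓ * ((∑ i ∈ Sᶜ, (i : ℕ)) - (n - k).choose 2) + fmaj π := by
  have hf := fixSet_plant hℓ S hS π hπ
  have hfix : fix (plant hℓ S hS π) = n - k := by
    rw [fix, hf, card_compl, Fintype.card_fin, hS]
  have hkn : k ≤ n := by simpa [hS] using card_le_univ S
  have hfc : (fixSet (plant hℓ S hS π))ᶜ = S := by rw [hf, compl_compl]
  have hmaj : maj (Der (plant hℓ S hS π)) = maj π := by
    refine maj_Der_eq _ (by rw [hfix]; lia) (by rw [hfc, hS]) π (fun j => ?_) fun j => ?_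
    · rw [orderEmbOfFin_congr hfc _ hS, orderEmbOfFin_congr hfc _ hS, plant_fst_emb]
    · rw [orderEmbOfFin_congr hfc _ hS, plant_snd_emb]
  refine ⟨hfix, ?_⟩
  rw [fmaf, maf, fmaj, hmaj, hf, hfix, col_plant]
  ring

/-- The contribution of the colored permutations with a prescribed set `S` of non-fixed
positions. -/
lemma sum_fiber {R : Type*} [CommSemiring R] (q x : R) (hℓ : 1 ≤ ℓ) (S : Finset (Fin n))
    (hS : #S = k) :
    ∑ σ ∈ (univ : Finset (CP ℓ n)).filter (fun σ => (fixSet σ)ᶜ = S), q ^ fmaf σ * x ^ fix σ =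
      x ^ (n - k) * (q ^ ℓ) ^ ((∑ i ∈ Sᶜ, (i : ℕ)) - (n - k).choose 2) *
        ∑ π ∈ (univ : Finset (CP ℓ k)).filter (fun π => fix π = 0), q ^ fmaj π := by
  rw [mul_sum]
  symm
  refine sum_bij (fun π _ => plant hℓ S hS π) ?_ ?_ ?_ ?_
  · intro π hπ
    simp [fixSet_plant hℓ S hS π (mem_filter.1 hπ).2]
  · exact fun π _ π' _ h => plant_injective hℓ S hS h
  · intro σ hσ
    obtain ⟨π, hπ, h⟩ := exists_plant hℓ S hS σ (by rw [← (mem_filter.1 hσ).2, compl_compl])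
    exact ⟨π, by simp [hπ], h⟩
  · intro π hπ
    obtain ⟨h1, h2⟩ := fmaf_plant hℓ S hS π (mem_filter.1 hπ).2
    rw [h1, h2, pow_add, pow_mul]
    ring

end CP

open MvPolynomial in
/-- `Σ_{σ ∈ G_{ℓ,n}} q^{fmaf σ} x^{fix σ}
  = Σ_{k=0}^n x^{n−k} [n choose k]_{q^ℓ} d_{ℓ,k}(q)`. -/
theorem fmaf_fix_generating_function_via_derangements (ℓ n : ℕ) (hℓ : 1 ≤ ℓ) :
    (∑ σ : CP ℓ n,
        (X 0 : MvPolynomial (Fin 2) ℤ) ^ CP.fmaf σ * (X 1) ^ CP.fix σ) =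
    ∑ k ∈ range (n + 1),
      (X 1 : MvPolynomial (Fin 2) ℤ) ^ (n - k) * qbinom ((X 0 : MvPolynomial (Fin 2) ℤ) ^ ℓ) n k *
        ∑ π ∈ (univ : Finset (CP ℓ k)).filter fun π => CP.fix π = 0,
          (X 0 : MvPolynomial (Fin 2) ℤ) ^ CP.fmaj π := by
  rw [← sum_fiberwise univ (fun σ : CP ℓ n => (CP.fixSet σ)ᶜ), ← powerset_univ, sum_powerset,
    card_univ, Fintype.card_fin]
  refine sum_congr rfl fun k _ => ?_
  rw [← sum_qpow_compl, mul_sum (powersetCard k univ), sum_mul]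
  exact sum_congr rfl fun S hS => CP.sum_fiber _ _ hℓ S (mem_powersetCard.1 hS).2
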